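/- Let 𝐱(t) be the large-amplitude breather solution of the discrete Klein–Gordon equation constructed in the main theorem, for γ ∈ C̃_{E,ν} sufficiently small. Then there exists a constant D₀ > 0, independent of γ and n, such that sup_{t∈[0,T]} |x_n(t)| ≤ (D₀ γ)^{(2n−1)/4} for all n ≥ 2. -/

import Mathlib

/-!
Away from the central site the breather is small, so there the equation is a small perturbation
of the forced linear oscillator `ẍ_n + Ω² x_n = f_n` with `Ω² = κ² + 2γ` and
`f_n = γ (x_{n+1} + x_{n-1}) - (V'(x_n) - κ² x_n)`.

A `T`-periodic solution of `ẍ + Ω² x = f` satisfies `2 Ω |sin (Ω T / 2)| sup |x| ≤ T sup |f|`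
(`periodic_oscillator_bound`, the Green function estimate). For `γ ∈ (Γ_m, γ_m)` the resonance
ratio `Ω T / (2π)` stays in `[m + ν/4, m + 1 - ν/4]` (`nonresonance_lower`, `nonresonance_upper`),
so `|sin (Ω T / 2)| ≥ sin (π ν / 4)`; since `T = O(γ^{-1/2})`, inverting the oscillator costs a
factor `A γ^{-1/2}`.

Near `0` one has `V'(x) = κ² x + O(x⁴)` (`deriv_potential_bound`), so with `|x_n| ≤ C γ^{1/4}` the
nonlinear term is absorbed into the left-hand side. What remains is
`sup |x_n| ≤ A γ^{1/2} sup |x_{n-1}| + ½ sup_{k ≥ n} |x_k|` for `n ≥ 2`, which gains a factor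
`2 A γ^{1/2}` per site (`geometric_decay`) from the starting size `C γ^{1/4}`. Hence
`D₀ = 4 A² + C⁴` works.
-/

open Real MeasureTheory

/-- The `T`-periodic symmetric solution of `ẍ + V'(x) + 2γx = 0` at energy `E`. -/
def SolAtEnergy (V : ℝ → ℝ) (Vinf γ E T : ℝ) (x : ℝ → ℝ) : Prop :=
  ContDiff ℝ 2 x ∧ 0 < T ∧ Function.Periodic x T ∧
  (∀ t, x (-t) = x t) ∧ (∀ t, x t = - x (T / 2 - t)) ∧
  x 0 = Real.sqrt (E - Vinf) / Real.sqrt γ ∧ deriv x 0 = 0 ∧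
  (∀ t, deriv (deriv x) t + deriv V (x t) + 2 * γ * x t = 0) ∧
  (∀ t, (deriv x t) ^ 2 / 2 + V (x t) + γ * (x t) ^ 2 = E)

/-- The breather of the main theorem: a `T`-periodic, symmetric, spatially localized
(`H²_per((0,T); l²(ℤ))`) solution of the discrete Klein--Gordon equation, close to the
central oscillation `xc` at `n = 0` (within `Cγ^{-1/4}`) and of size `Cγ^{1/4}` at the
other sites. -/
def IsBreather (V : ℝ → ℝ) (γ T C : ℝ) (xc : ℝ → ℝ) (x : ℤ → ℝ → ℝ) : Prop :=
  (∀ n, Differentiable ℝ (x n)) ∧ (∀ n, Differentiable ℝ (deriv (x n))) ∧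
  (∀ n, Function.Periodic (x n) T) ∧
  Summable (fun n : ℤ => ∫ t in (0:ℝ)..T,
    (x n t) ^ 2 + (deriv (x n) t) ^ 2 + (deriv (deriv (x n)) t) ^ 2) ∧
  (∀ n : ℤ, ∀ t : ℝ, deriv (deriv (x n)) t + deriv V (x n t)
    = γ * (x (n + 1) t - 2 * x n t + x (n - 1) t)) ∧
  (∀ n : ℤ, ∀ t : ℝ, x n t = x (-n) t) ∧
  (∀ n : ℤ, ∀ t : ℝ, x n (-t) = x n t) ∧
  (∀ n : ℤ, ∀ t : ℝ, x n t = - x n (T / 2 - t)) ∧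
  (∀ t ∈ Set.Icc (0:ℝ) T, |x 0 t - xc t| ≤ C * γ ^ (-(1:ℝ)/4)) ∧
  (∀ n : ℤ, 1 ≤ n → ∀ t ∈ Set.Icc (0:ℝ) T, |x n t| ≤ C * γ ^ ((1:ℝ)/4))

/-! ### Periodic forced oscillators -/

/-- Green function estimate for periodic solutions of a forced harmonic oscillator. The function
`s ↦ cos (Ω (s - T/2)) ẋ(t + s) + Ω sin (Ω (s - T/2)) x(t + s)` has derivative
`cos (Ω (s - T/2)) (ẍ + Ω² x)(t + s)`, and by periodicity its increment over `[0, T]` is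
`2 Ω sin (Ω T / 2) x(t)`. -/
lemma periodic_oscillator_bound (x : ℝ → ℝ) (T Ω F : ℝ) (hT : 0 < T) (hΩ : 0 < Ω)
    (hd : Differentiable ℝ x) (hdd : Differentiable ℝ (deriv x)) (hp : Function.Periodic x T)
    (hF : ∀ t, |deriv (deriv x) t + Ω ^ 2 * x t| ≤ F) (t : ℝ) :
    2 * Ω * |sin (Ω * T / 2)| * |x t| ≤ F * T := by
  have hp' : deriv x (t + T) = deriv x t := by
    have h1 : (fun s => x (s + T)) = x := funext hp
    have h2 := deriv_comp_add_const x T t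
    rw [h1] at h2
    exact h2.symm
  set g : ℝ → ℝ := fun s => cos (Ω * (s - T / 2)) * deriv x (t + s)
    + Ω * sin (Ω * (s - T / 2)) * x (t + s) with hg
  have hgd : ∀ s, HasDerivAt g
      (cos (Ω * (s - T / 2)) * (deriv (deriv x) (t + s) + Ω ^ 2 * x (t + s))) s := by
    intro s
    have ha : HasDerivAt (fun s => Ω * (s - T / 2)) Ω s := by
      simpa using ((hasDerivAt_id s).sub_const (T / 2)).const_mul Ω
    have hx : HasDerivAt (fun s => x (t + s)) (deriv x (t + s)) s :=
      (hd (t + s)).hasDerivAt.comp_const_add t s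
    have hx' : HasDerivAt (fun s => deriv x (t + s)) (deriv (deriv x) (t + s)) s :=
      (hdd (t + s)).hasDerivAt.comp_const_add t s
    refine ((ha.cos.mul hx').add ((ha.sin.const_mul Ω).mul hx)).congr_deriv ?_
    ring
  have hb := norm_image_sub_le_of_norm_deriv_le_segment' (f := g) (C := F) (a := 0) (b := T)
    (fun s _ => (hgd s).hasDerivWithinAt) (fun s _ => by
      rw [Real.norm_eq_abs, abs_mul]
      calc _ ≤ 1 * F := mul_le_mul (abs_cos_le_one _) (hF _) (abs_nonneg _) zero_le_one
        _ = F := one_mul F) T ⟨hT.le, le_rfl⟩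
  have hval : g T - g 0 = 2 * Ω * sin (Ω * T / 2) * x t := by
    simp only [hg, add_zero, hp', hp t]
    have e1 : Ω * (T - T / 2) = Ω * T / 2 := by ring
    have e2 : Ω * (0 - T / 2) = -(Ω * T / 2) := by ring
    rw [e1, e2, cos_neg, sin_neg]
    ring
  rw [hval, Real.norm_eq_abs, abs_mul, abs_mul, abs_of_pos (by positivity : 0 < 2 * Ω)] at hb
  simpa using hb

/-! ### The potential near zero -/

/-- The potential agrees with its quadratic part up to `O(x⁶)` and is `C³` near `0`, so its
derivative agrees with the linear part up to `O(x⁴)`. This interpolation compares `V'(x)` with the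
symmetric difference quotient of `V` of step `h = x²`: the quotient is within `O(h²)` of `V'(x)`,
and within `O(x⁶ / h)` of `κ² x`. -/
lemma deriv_potential_bound (V : ℝ → ℝ) (x₀ κ : ℝ) (hV : ContDiff ℝ 2 V)
    (hVeven : ∀ x, V (-x) = V x) (hx₀ : 0 < x₀)
    (hV7 : ContDiffOn ℝ 7 V (Set.Ioo (-x₀) x₀))
    (htaylor : ∃ K > (0:ℝ), ∃ r > (0:ℝ), ∀ x : ℝ, |x| ≤ r →
      |V x - κ ^ 2 * x ^ 2 / 2| ≤ K * x ^ 6) :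
    ∃ K > (0:ℝ), ∃ r > (0:ℝ), ∀ x : ℝ, |x| ≤ r →
      |deriv V x - κ ^ 2 * x| ≤ K * x ^ 4 := by
  obtain ⟨K, hK, r, hr, hKr⟩ := htaylor
  have hat1 : ContDiffAt ℝ 1 (deriv (deriv V)) 0 := by
    have ho : IsOpen (Set.Ioo (-x₀) x₀) := isOpen_Ioo
    have h2 : ContDiffOn ℝ 1 (deriv (deriv V)) (Set.Ioo (-x₀) x₀) :=
      (hV7.deriv_of_isOpen ho (m := 2) (by norm_num)).deriv_of_isOpen ho (by norm_num)
    exact (h2 0 ⟨by linarith, hx₀⟩).contDiffAt (Ioo_mem_nhds (by linarith) hx₀)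
  obtain ⟨L, s, hs, hL⟩ := hat1.exists_lipschitzOnWith
  obtain ⟨δ, hδ, hball⟩ := Metric.mem_nhds_iff.mp hs
  have hLip : ∀ u v : ℝ, |u| < δ → |v| < δ →
      |deriv (deriv V) u - deriv (deriv V) v| ≤ L * |u - v| := by
    intro u v hu hv
    have := hL.dist_le_mul u (hball (by simpa using hu)) v (hball (by simpa using hv))
    simpa [Real.dist_eq] using this
  have hVd : Differentiable ℝ V := hV.differentiable (by norm_num)
  have hVdd : Differentiable ℝ (deriv V) := by
    have : ContDiff ℝ 1 (deriv V) := by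
      have h : ContDiff ℝ (1 + 1) V := by simpa [one_add_one_eq_two] using hV
      exact (contDiff_succ_iff_deriv.mp h).2.2
    exact this.differentiable (by norm_num)
  refine ⟨64 * K + L, by positivity, min (min (1 / 2) (r / 2)) (δ / 3), by positivity, ?_⟩
  intro x hx
  have hx1 : |x| ≤ 1 / 2 := hx.trans ((min_le_left _ _).trans (min_le_left _ _))
  have hx2 : |x| ≤ r / 2 := hx.trans ((min_le_left _ _).trans (min_le_right _ _))
  have hx3 : |x| ≤ δ / 3 := hx.trans (min_le_right _ _)
  rcases eq_or_ne x 0 with rfl | hx0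
  · have h1 := deriv_comp_neg V 0
    simp only [hVeven, neg_zero] at h1
    have h2 : deriv V 0 = 0 := by linarith
    simp [h2]
  have hxp : 0 < |x| := abs_pos.mpr hx0
  set h : ℝ := x ^ 2 with hh
  have hhpos : 0 < h := by positivity
  have hhx : h ≤ |x| := by rw [hh, ← sq_abs]; nlinarith
  have hin : ∀ u : ℝ, 0 ≤ u → u ≤ h → |x + u| ≤ 2 * |x| ∧ |x - u| ≤ 2 * |x| := by
    intro u hu huh
    have h1 := abs_add_le x u
    have h2 := abs_sub x u
    rw [abs_of_nonneg hu] at h1 h2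
    constructor <;> linarith
  -- second-order symmetric difference of `V'`
  have hfirst : ∀ u ∈ Set.Icc (0:ℝ) h,
      ‖(deriv V (x + u) + deriv V (x - u)) - (deriv V (x + 0) + deriv V (x - 0))‖
        ≤ 2 * L * h * (u - 0) := by
    refine norm_image_sub_le_of_norm_deriv_le_segment'
      (f := fun u => deriv V (x + u) + deriv V (x - u))
      (f' := fun u => deriv (deriv V) (x + u) - deriv (deriv V) (x - u)) ?_ ?_
    · intro u _
      have h1 := (hVdd (x + u)).hasDerivAt.comp_const_add x u
      have h2 := (hVdd (x - u)).hasDerivAt.comp_const_sub x u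
      exact ((h1.add h2).congr_deriv (by ring)).hasDerivWithinAt
    · intro u hu
      obtain ⟨h1, h2⟩ := hin u hu.1 hu.2.le
      have h3 := hLip (x + u) (x - u) (by linarith) (by linarith)
      rw [Real.norm_eq_abs]
      refine h3.trans ?_
      have : |x + u - (x - u)| = 2 * u := by
        rw [show x + u - (x - u) = 2 * u by ring, abs_of_nonneg (by linarith [hu.1])]
      rw [this]
      have := mul_le_mul_of_nonneg_left hu.2.le L.coe_nonneg
      linarith
  have hsecond :
      ‖(V (x + h) - V (x - h) - 2 * h * deriv V x) - (V (x + 0) - V (x - 0) - 2 * 0 * deriv V x)‖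
        ≤ 2 * L * h * h * (h - 0) := by
    refine norm_image_sub_le_of_norm_deriv_le_segment'
      (f := fun u => V (x + u) - V (x - u) - 2 * u * deriv V x)
      (f' := fun u => deriv V (x + u) + deriv V (x - u) - 2 * deriv V x) ?_ ?_ h
      ⟨hhpos.le, le_rfl⟩
    · intro u _
      have h1 := (hVd (x + u)).hasDerivAt.comp_const_add x u
      have h2 := (hVd (x - u)).hasDerivAt.comp_const_sub x u
      have h3 : HasDerivAt (fun u => 2 * u * deriv V x) (2 * deriv V x) u := by
        simpa using ((hasDerivAt_id u).const_mul 2).mul_const (deriv V x)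
      exact (((h1.sub h2).sub h3).congr_deriv (by ring)).hasDerivWithinAt
    · intro u hu
      have h1 := hfirst u ⟨hu.1, hu.2.le⟩
      have h2 : deriv V (x + u) + deriv V (x - u) - 2 * deriv V x =
        (deriv V (x + u) + deriv V (x - u)) - (deriv V (x + 0) + deriv V (x - 0)) := by
        rw [add_zero, sub_zero]; ring
      rw [h2]
      refine h1.trans ?_
      have hL0 : (0:ℝ) ≤ 2 * L * h := by positivity
      rw [sub_zero]
      exact mul_le_mul_of_nonneg_left hu.2.le hL0
  obtain ⟨hp, hm⟩ := hin h hhpos.le le_rfl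
  have hpow : ∀ y : ℝ, |y| ≤ 2 * |x| → y ^ 6 ≤ 64 * h ^ 3 := by
    intro y hy
    calc y ^ 6 = |y| ^ 6 := (Even.pow_abs (by decide) y).symm
      _ ≤ (2 * |x|) ^ 6 := pow_le_pow_left₀ (abs_nonneg y) hy 6
      _ = 64 * (|x| ^ 2) ^ 3 := by ring
      _ = 64 * h ^ 3 := by rw [sq_abs]
  have hVp := abs_le.mp (hKr (x + h) (by linarith))
  have hVm := abs_le.mp (hKr (x - h) (by linarith))
  have hKp := mul_le_mul_of_nonneg_left (hpow _ hp) hK.le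
  have hKm := mul_le_mul_of_nonneg_left (hpow _ hm) hK.le
  simp only [add_zero, sub_zero, sub_self, mul_zero, zero_mul, Real.norm_eq_abs] at hsecond
  have hs2 := abs_le.mp hsecond
  -- everything carries a factor `2 h`, which is divided out at the end
  have hkey : |2 * h * (deriv V x - κ ^ 2 * x)| ≤ 2 * h * ((64 * K + L) * h ^ 2) := by
    rw [abs_le]
    constructor <;> nlinarith
  rw [abs_mul, abs_of_pos (by positivity : 0 < 2 * h)] at hkey
  have := le_of_mul_le_mul_left hkey (by positivity)
  calc _ ≤ _ := this
    _ = _ := by rw [hh]; ring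

/-! ### Geometric decay from a three-site inequality -/

/-- A bounded family whose `(j+1)`-st member is controlled by `q / 2` times its left neighbour plus
half the size of itself and its right neighbour decays like `q ^ j`. Induction on `n`: the
supremum `M` over all indices beyond `n` satisfies `M ≤ q a / 2 + M / 2`, with `a` the bound
from index `n` on. -/
lemma geometric_decay (z : ℕ → ℝ → ℝ) (q B : ℝ)
    (hB : ∀ j t, |z j t| ≤ B)
    (hstep : ∀ j a b, (∀ t, |z j t| ≤ a) → (∀ t, |z (j + 1) t| ≤ b) → (∀ t, |z (j + 2) t| ≤ b) →
      ∀ t, |z (j + 1) t| ≤ q * a / 2 + b / 2) (n : ℕ) :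
    ∀ j, n ≤ j → ∀ t, |z j t| ≤ q ^ n * B := by
  induction n with
  | zero => intro j _ t; simpa using hB j t
  | succ n ih =>
    set S : Set ℝ := {r | ∃ j t, n + 1 ≤ j ∧ r = |z j t|} with hS
    have hbdd : BddAbove S := ⟨B, by rintro _ ⟨j, t, _, rfl⟩; exact hB j t⟩
    have hle : ∀ j, n + 1 ≤ j → ∀ t, |z j t| ≤ sSup S :=
      fun j hj t => le_csSup hbdd ⟨j, t, hj, rfl⟩
    have hM : sSup S ≤ q * (q ^ n * B) / 2 + sSup S / 2 := by
      refine csSup_le ⟨_, n + 1, 0, le_rfl, rfl⟩ ?_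
      rintro _ ⟨j, t, hj, rfl⟩
      obtain ⟨i, rfl⟩ : ∃ i, j = i + 1 := ⟨j - 1, by omega⟩
      exact hstep i _ _ (ih i (by omega)) (hle _ hj) (hle _ (by omega)) t
    intro j hj t
    have := hle j hj t
    rw [pow_succ']
    linarith

/-! ### Non-resonance -/

lemma sqrt_lower (ν m : ℝ) (hν : ν ∈ Set.Ioo (0:ℝ) 1) (hm : 1 ≤ m) :
    m + ν / 3 ≤ √(m ^ 2 + ν * m) := by
  obtain ⟨h0, h1⟩ := hν
  apply Real.le_sqrt_of_sq_le
  nlinarith [mul_le_mul_of_nonneg_left hm h0.le]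

lemma sqrt_upper (ν m : ℝ) (hν : ν ∈ Set.Ioo (0:ℝ) 1) (hm : 0 ≤ m) :
    √((m + 1) ^ 2 - ν * (m + 1)) ≤ m + 1 - ν / 2 := by
  obtain ⟨h0, h1⟩ := hν
  apply Real.sqrt_le_iff.mpr
  constructor
  · linarith
  · nlinarith [sq_nonneg ν]

/-- If `θ / π` has distance at least `ν / 4` from the integers, then `|sin θ| ≥ sin (π ν / 4)`; here
`θ = Ω T / 2`. -/
lemma abs_sin_lower (ν θ : ℝ) (m : ℕ) (hν : ν ∈ Set.Ioo (0:ℝ) 1)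
    (h1 : π * (m + ν / 4) ≤ θ) (h2 : θ ≤ π * (m + 1 - ν / 4)) :
    sin (π * ν / 4) ≤ |sin θ| := by
  obtain ⟨h0, hν1⟩ := hν
  have hpi := Real.pi_pos
  have hper : |sin (θ - m * π)| = |sin θ| := by
    rw [Real.sin_sub_nat_mul_pi, abs_mul, abs_pow]
    simp
  rw [← hper]
  refine le_trans ?_ (le_abs_self _)
  rcases le_total (θ - m * π) (π / 2) with h | h
  · exact Real.sin_le_sin_of_le_of_le_pi_div_two (by nlinarith) h (by linarith)
  · rw [← Real.sin_pi_sub (θ - m * π)]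
    exact Real.sin_le_sin_of_le_of_le_pi_div_two (by nlinarith) (by linarith) (by linarith)

/-- The leading-order period `√2 π / √γ + λ` decreases in `γ`, so the period itself does so up to
the error of the expansion. -/
lemma period_almost_antitone (T : ℝ → ℝ) (lam CT γ' : ℝ) (hCT : 0 < CT)
    (hT : ∀ γ ∈ Set.Ioo (0:ℝ) γ', |T γ - (√2 * π / √γ + lam)| ≤ CT * γ)
    (g₁ g₂ : ℝ) (h1 : 0 < g₁) (h12 : g₁ < g₂) (h2 : g₂ < γ') :
    T g₂ ≤ T g₁ + 2 * CT * g₂ := by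
  have ha := abs_le.mp (hT g₁ ⟨h1, h12.trans h2⟩)
  have hb := abs_le.mp (hT g₂ ⟨h1.trans h12, h2⟩)
  have hc : √2 * π / √g₂ ≤ √2 * π / √g₁ :=
    div_le_div_of_nonneg_left (mul_nonneg (Real.sqrt_nonneg _) Real.pi_pos.le) (Real.sqrt_pos.mpr h1) (Real.sqrt_le_sqrt h12.le)
  nlinarith

/-- Below `γ_m` the resonance ratio is at least `m + ν / 4`. -/
lemma nonresonance_lower (T : ℝ → ℝ) (lam CT γ' κ ν : ℝ) (hCT : 0 < CT)
    (hT : ∀ γ ∈ Set.Ioo (0:ℝ) γ', |T γ - (√2 * π / √γ + lam)| ≤ CT * γ)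
    (hκ : 0 < κ) (hν : ν ∈ Set.Ioo (0:ℝ) 1) (γ g : ℝ) (m : ℕ) (hm : 1 ≤ m)
    (hγ : 0 < γ) (hγg : γ < g) (hg : g < γ') (hTγ : 0 < T γ) (hTg : 0 < T g)
    (heq : κ / √((m : ℝ) ^ 2 + ν * (m : ℝ)) = √g * (2 * π / (√g * T g)))
    (hs : 2 * κ * CT * g ≤ π * ν / 6) :
    π * (m + ν / 4) ≤ √(κ ^ 2 + 2 * γ) * T γ / 2 := by
  have hpi := Real.pi_pos
  have hm1 : (1:ℝ) ≤ m := by exact_mod_cast hm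
  have hsq := sqrt_lower ν m hν hm1
  have hsqpos : 0 < √((m : ℝ) ^ 2 + ν * (m : ℝ)) := by linarith [hν.1]
  have hg0 : 0 < √g := Real.sqrt_pos.mpr (hγ.trans hγg)
  have h1 : κ * T g = 2 * π * √((m : ℝ) ^ 2 + ν * (m : ℝ)) := by
    generalize √((m : ℝ) ^ 2 + ν * (m : ℝ)) = R at *
    field_simp at heq
    linarith
  have h2 := mul_le_mul_of_nonneg_left
    (period_almost_antitone T lam CT γ' hCT hT γ g hγ hγg hg) hκ.le
  have h3 : κ ≤ √(κ ^ 2 + 2 * γ) := Real.le_sqrt_of_sq_le (by linarith)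
  have h4 := mul_le_mul_of_nonneg_right h3 hTγ.le
  have h5 := mul_le_mul_of_nonneg_left hsq hpi.le
  linarith

/-- Above `Γ_m` the resonance ratio is at most `m + 1 - ν / 4`. Replacing `κ` by
`√(κ² + 2γ)` only costs `γ T / κ = O(√γ)`. -/
lemma nonresonance_upper (T : ℝ → ℝ) (lam CT γ' κ ν B : ℝ) (hCT : 0 < CT)
    (hT : ∀ γ ∈ Set.Ioo (0:ℝ) γ', |T γ - (√2 * π / √γ + lam)| ≤ CT * γ)
    (hκ : 0 < κ) (hν : ν ∈ Set.Ioo (0:ℝ) 1) (γ G : ℝ) (m : ℕ)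
    (hG : 0 < G) (hGγ : G < γ) (hγ : γ < γ') (hTγ : 0 < T γ) (hTG : 0 < T G)
    (heq : √(κ ^ 2 + 4 * G) / √(((m : ℝ) + 1) ^ 2 - ν * ((m : ℝ) + 1))
      = √G * (2 * π / (√G * T G)))
    (hB : γ * T γ ≤ B) (hs : 2 * κ * CT * γ ≤ π * ν / 6) (hs' : B ≤ κ * (π * ν / 4)) :
    √(κ ^ 2 + 2 * γ) * T γ / 2 ≤ π * (m + 1 - ν / 4) := by
  have hpi := Real.pi_pos
  have hm0 : (0:ℝ) ≤ m := m.cast_nonneg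
  have hν0 := hν.1
  have hν1 := hν.2
  have hsq := sqrt_upper ν m hν hm0
  have hsqpos : 0 < √(((m : ℝ) + 1) ^ 2 - ν * ((m : ℝ) + 1)) := by
    apply Real.sqrt_pos.mpr
    nlinarith
  have hG0 : 0 < √G := Real.sqrt_pos.mpr hG
  have h1 : √(κ ^ 2 + 4 * G) * T G = 2 * π * √(((m : ℝ) + 1) ^ 2 - ν * ((m : ℝ) + 1)) := by
    generalize √(((m : ℝ) + 1) ^ 2 - ν * ((m : ℝ) + 1)) = R at *
    field_simp at heq
    linarith
  have h2 := mul_le_mul_of_nonneg_left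
    (period_almost_antitone T lam CT γ' hCT hT G γ hG hGγ hγ) hκ.le
  have h3 : κ ≤ √(κ ^ 2 + 4 * G) := Real.le_sqrt_of_sq_le (by linarith)
  have h4 := mul_le_mul_of_nonneg_right h3 hTG.le
  have h5 := mul_le_mul_of_nonneg_left hsq hpi.le
  have hγ0 : 0 < γ := hG.trans hGγ
  have h6 : √(κ ^ 2 + 2 * γ) ≤ κ + γ / κ := by
    apply Real.sqrt_le_iff.mpr
    refine ⟨by positivity, ?_⟩
    have : (κ + γ / κ) ^ 2 = κ ^ 2 + 2 * γ + (γ / κ) ^ 2 := by field_simp; ring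
    rw [this]
    linarith [sq_nonneg (γ / κ)]
  have h7 := mul_le_mul_of_nonneg_right h6 hTγ.le
  have h8 : γ / κ * T γ ≤ π * ν / 4 := by
    rw [div_mul_eq_mul_div, div_le_iff₀ hκ]
    linarith
  have : (κ + γ / κ) * T γ = κ * T γ + γ / κ * T γ := by ring
  have hπν : 0 < π * ν := mul_pos hpi hν0
  linarith

/-! ### Decay of the breather -/

/-- Geometric decay of the breather for one fixed coupling `γ = p⁴`, under quantitative
smallness of `p` and non-resonance `s₀ ≤ |sin (Ω T / 2)|`. -/
lemma breather_decay (V : ℝ → ℝ) (κ K r C B s₀ T p : ℝ) (xc : ℝ → ℝ) (x : ℤ → ℝ → ℝ)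
    (hκ : 0 < κ) (hK : 0 < K) (hB : 0 < B) (hs₀ : 0 < s₀) (hT : 0 < T)
    (hp : 0 < p) (hC : 0 < C)
    (hVK : ∀ y : ℝ, |y| ≤ r → |deriv V y - κ ^ 2 * y| ≤ K * y ^ 4)
    (hTB : T ≤ B / p ^ 2)
    (hsin : s₀ ≤ |sin (√(κ ^ 2 + 2 * p ^ 4) * T / 2)|)
    (hr : C * p ≤ r)
    (hsmall : B / (2 * κ * s₀) * (p ^ 2 + K * C ^ 3 * p) ≤ 1 / 2)
    (hroot : (p ^ 4) ^ ((1:ℝ)/4) = p)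
    (hx : IsBreather V (p ^ 4) T C xc x) (j : ℕ) (t : ℝ) :
    |x (j + 1) t| ≤ (2 * (B / (2 * κ * s₀)) * p ^ 2) ^ j * (C * p) := by
  obtain ⟨hd, hdd, hper, -, heq, -, -, -, -, hbd⟩ := hx
  rw [hroot] at hbd
  have hbd' : ∀ n : ℤ, 1 ≤ n → ∀ t, |x n t| ≤ C * p := by
    intro n hn t
    obtain ⟨y, hy, hyt⟩ := (hper n).exists_mem_Ico₀ hT t
    rw [hyt]
    exact hbd n hn y ⟨hy.1, hy.2.le⟩
  refine geometric_decay (fun j => x (j + 1)) _ _ (fun j t => hbd' _ (by omega) t) ?_ j j le_rfl t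
  intro i a b h0 h1 h2 t
  push_cast at h1 h2 ⊢
  have ha : 0 ≤ a := (abs_nonneg _).trans (h0 0)
  have hb : 0 ≤ b := (abs_nonneg _).trans (h1 0)
  set Ω := √(κ ^ 2 + 2 * p ^ 4) with hΩ
  have hΩsq : Ω ^ 2 = κ ^ 2 + 2 * p ^ 4 := Real.sq_sqrt (by positivity)
  have hκΩ : κ ≤ Ω := Real.le_sqrt_of_sq_le (by linarith [pow_pos hp 4])
  have hforce : ∀ s, |deriv (deriv (x (i + 1 + 1))) s + Ω ^ 2 * x (i + 1 + 1) s|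
      ≤ p ^ 4 * (a + b) + K * (b * (C * p) ^ 3) := by
    intro s
    have e := heq (i + 1 + 1) s
    rw [show (i + 1 + 1 + 1 : ℤ) = i + 2 + 1 by ring, show (i + 1 + 1 - 1 : ℤ) = i + 1 by ring] at e
    have hu := hbd' (i + 1 + 1) (by omega) s
    have hN := hVK _ (hu.trans hr)
    have hu4 : x (i + 1 + 1) s ^ 4 ≤ b * (C * p) ^ 3 := by
      calc x (i + 1 + 1) s ^ 4 = |x (i + 1 + 1) s| * |x (i + 1 + 1) s| ^ 3 := by
            rw [← Even.pow_abs (by decide : Even 4)]; ring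
        _ ≤ b * (C * p) ^ 3 :=
            mul_le_mul (h1 s) (pow_le_pow_left₀ (abs_nonneg _) hu 3) (by positivity) hb
    have hN' := hN.trans (mul_le_mul_of_nonneg_left hu4 hK.le)
    have hsum : |p ^ 4 * (x (i + 2 + 1) s + x (i + 1) s)| ≤ p ^ 4 * (a + b) := by
      rw [abs_mul, abs_of_pos (pow_pos hp 4)]
      refine mul_le_mul_of_nonneg_left ?_ (by positivity)
      have := abs_add_le (x (i + 2 + 1) s) (x (i + 1) s)
      linarith [h0 s, h2 s]
    have hid : deriv (deriv (x (i + 1 + 1))) s + Ω ^ 2 * x (i + 1 + 1) s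
        = p ^ 4 * (x (i + 2 + 1) s + x (i + 1) s)
          - (deriv V (x (i + 1 + 1) s) - κ ^ 2 * x (i + 1 + 1) s) := by
      rw [hΩsq]
      linarith
    rw [hid, abs_le]
    constructor <;> linarith [abs_le.mp hsum, (abs_le.mp hsum).1, (abs_le.mp hsum).2,
      (abs_le.mp hN').1, (abs_le.mp hN').2]
  have hosc := periodic_oscillator_bound _ T Ω _ hT (hκ.trans_le hκΩ) (hd _) (hdd _) (hper _)
    hforce t
  set u := |x (i + 1 + 1) t| with hu
  set F := p ^ 4 * (a + b) + K * (b * (C * p) ^ 3) with hF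
  have hF0 : 0 ≤ F := by positivity
  have hleft : 2 * κ * s₀ * u ≤ 2 * Ω * |sin (Ω * T / 2)| * u := by
    have : 0 ≤ u := abs_nonneg _
    gcongr
  have hright : F * T ≤ F * (B / p ^ 2) := mul_le_mul_of_nonneg_left hTB hF0
  set A := B / (2 * κ * s₀) with hA
  have hmain : u ≤ A * (p ^ 2 * (a + b) + K * C ^ 3 * p * b) := by
    have h3 : 2 * κ * s₀ * u ≤ F * (B / p ^ 2) := hleft.trans (hosc.trans hright)
    have h4 : F * (B / p ^ 2) = 2 * κ * s₀ * (A * (p ^ 2 * (a + b) + K * C ^ 3 * p * b)) := by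
      rw [hF, hA]
      field_simp
    rw [h4] at h3
    exact le_of_mul_le_mul_left h3 (by positivity)
  have habsorb := mul_le_mul_of_nonneg_right hsmall hb
  calc u ≤ _ := hmain
    _ = 2 * A * p ^ 2 * a / 2 + A * (p ^ 2 + K * C ^ 3 * p) * b := by ring
    _ ≤ _ := by linarith

/-- The per-site factor `2 A √γ` and the starting size `C γ^{1/4}`, with `p = γ^{1/4}`, combine to
the rate `(D₀ γ)^{(2n-1)/4}` at `n = j + 1` with `D₀ = 4 A² + C⁴`. -/
lemma decay_rate (A C p : ℝ) (hA : 0 < A) (hC : 0 < C) (hp : 0 < p) (j : ℕ) :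
    (2 * A * p ^ 2) ^ j * (C * p)
      ≤ ((4 * A ^ 2 + C ^ 4) * p ^ 4) ^ ((2 * ((j : ℝ) + 1) - 1) / 4) := by
  obtain ⟨D, hD⟩ : ∃ D, D = (4 * A ^ 2 + C ^ 4) * p ^ 4 := ⟨_, rfl⟩
  rw [← hD]
  have hDpos : 0 < D := by rw [hD]; positivity
  have h1 : 2 * A * p ^ 2 ≤ D ^ ((1:ℝ)/2) := by
    rw [← Real.sqrt_eq_rpow]
    apply Real.le_sqrt_of_sq_le
    rw [hD]
    nlinarith [mul_pos (pow_pos hC 4) (pow_pos hp 4)]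
  have h2 : C * p ≤ D ^ ((1:ℝ)/4) := by
    have h3 : C * p = ((C * p) ^ 4) ^ ((1:ℝ)/4) := by
      rw [← Real.rpow_natCast, ← Real.rpow_mul (by positivity)]; norm_num
    rw [h3]
    refine Real.rpow_le_rpow (by positivity) ?_ (by norm_num)
    rw [hD, mul_pow]
    nlinarith [mul_pos (pow_pos hA 2) (pow_pos hp 4)]
  calc (2 * A * p ^ 2) ^ j * (C * p) ≤ (D ^ ((1:ℝ)/2)) ^ j * D ^ ((1:ℝ)/4) :=
        mul_le_mul (pow_le_pow_left₀ (by positivity) h1 j) h2 (by positivity) (by positivity)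
    _ = D ^ ((2 * ((j : ℝ) + 1) - 1) / 4) := by
        rw [← Real.rpow_natCast (D ^ ((1:ℝ)/2)) j, ← Real.rpow_mul hDpos.le,
          ← Real.rpow_add hDpos]
        congr 1
        ring

/-- exponential spatial decay of the large-amplitude breather: there is a
constant `D₀ > 0`, independent of `γ` and `n`, with
`sup_{t ∈ [0,T]} |x_n(t)| ≤ (D₀γ)^{(2n-1)/4}` for all `n ≥ 2` and all sufficiently small
`γ` in the non-resonant set `C̃_{E,ν}`. -/
theorem stmt12
    (V : ℝ → ℝ) (VL Vinf a0 κ x₀ : ℝ)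
    (hV : ContDiff ℝ 2 V) (hVeven : ∀ x, V (-x) = V x)
    (hx₀ : 0 < x₀) (hV7 : ContDiffOn ℝ 7 V (Set.Ioo (-x₀) x₀)) (hκ : 0 < κ)
    (htaylor : ∃ K > (0:ℝ), ∃ r > (0:ℝ), ∀ x : ℝ, |x| ≤ r →
      |V x - κ ^ 2 * x ^ 2 / 2| ≤ K * x ^ 6)
    (hVnonneg : ∀ x, 0 ≤ V x) (hVle : ∀ x, V x ≤ VL) (hVL : 0 < VL)
    (ha0 : 0 < a0) (hVinf : 0 < Vinf) (hVinfL : Vinf ≤ VL)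
    (hVconst : ∀ x : ℝ, a0 ≤ |x| → V x = Vinf)
    (E ν : ℝ) (hE : VL < E) (hν : ν ∈ Set.Ioo (0:ℝ) 1)
    (hnondeg : (∫ s in (0:ℝ)..a0, (E - V s) ^ (-(3:ℝ)/2))
        - a0 * (E - Vinf) ^ (-(3:ℝ)/2) ≠ 0)
    (lam : ℝ)
    (hlam : lam = 2 * Real.sqrt 2 * ((∫ s in (0:ℝ)..a0, 1 / Real.sqrt (E - V s))
      - a0 / Real.sqrt (E - Vinf)))
    (T ω₀ : ℝ → ℝ) (hTpos : ∀ γ : ℝ, 0 < γ → 0 < T γ)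
    (hT : ∃ C > (0:ℝ), ∃ γ' > (0:ℝ), ∀ γ ∈ Set.Ioo (0:ℝ) γ',
      |T γ - (Real.sqrt 2 * π / Real.sqrt γ + lam)| ≤ C * γ)
    (hω₀ : ∀ γ : ℝ, 0 < γ → ω₀ γ = 2 * π / (Real.sqrt γ * T γ))
    (Γt γt : ℕ → ℝ) (m₀ : ℕ)
    (hpos : ∀ m ≥ m₀, 0 < Γt m ∧ 0 < γt m)
    (hsmall : Filter.Tendsto Γt Filter.atTop (nhds 0) ∧
      Filter.Tendsto γt Filter.atTop (nhds 0))
    (hΓeq : ∀ m ≥ m₀, Real.sqrt (κ ^ 2 + 4 * Γt m)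
      / Real.sqrt (((m : ℝ) + 1) ^ 2 - ν * ((m : ℝ) + 1))
      = Real.sqrt (Γt m) * ω₀ (Γt m))
    (hγeq : ∀ m ≥ m₀, κ / Real.sqrt ((m : ℝ) ^ 2 + ν * (m : ℝ))
      = Real.sqrt (γt m) * ω₀ (γt m))
    -- the constant of the main theorem
    (C : ℝ) (hC : 0 < C) :
    ∃ D₀ > (0:ℝ), ∃ γ₀ > (0:ℝ),
      ∀ m : ℕ, m₀ ≤ m → ∀ γ ∈ Set.Ioo (Γt m) (γt m), γ < γ₀ →
        ∀ xc : ℝ → ℝ, SolAtEnergy V Vinf γ E (T γ) xc →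
        ∀ x : ℤ → ℝ → ℝ, IsBreather V γ (T γ) C xc x →
          ∀ n : ℤ, 2 ≤ n → ∀ t ∈ Set.Icc (0:ℝ) (T γ),
            |x n t| ≤ (D₀ * γ) ^ ((2 * (n : ℝ) - 1) / 4) := by
  obtain ⟨K, hK, r, hr, hVK⟩ := deriv_potential_bound V x₀ κ hV hVeven hx₀ hV7 htaylor
  obtain ⟨CT, hCT, γ', hγ', hTasym⟩ := hT
  have hpi := Real.pi_pos
  have hν0 := hν.1
  have hν1 := hν.2
  set s₀ := sin (π * ν / 4) with hs₀def
  have hs₀ : 0 < s₀ := Real.sin_pos_of_pos_of_lt_pi (by positivity) (by nlinarith)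
  -- `B` bounds `√γ T γ`, for all small `γ`
  set B := √2 * π + |lam| + CT with hBdef
  have hB : 0 < B := by positivity
  set A := B / (2 * κ * s₀) with hA
  have hApos : 0 < A := by positivity
  have hev : ∀ᶠ γ : ℝ in nhds 0, γ < γ' ∧ γ < 1 ∧ 2 * κ * CT * γ < π * ν / 6 ∧
      B * √γ < κ * (π * ν / 4) ∧ C * γ ^ ((1:ℝ)/4) < r ∧
      A * ((γ ^ ((1:ℝ)/4)) ^ 2 + K * C ^ 3 * γ ^ ((1:ℝ)/4)) < 1 / 2 := by
    have hc : Continuous fun γ : ℝ => γ ^ ((1:ℝ)/4) :=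
      Real.continuous_rpow_const (by norm_num)
    have key : ∀ (f : ℝ → ℝ) (c : ℝ), Continuous f → f 0 = 0 → 0 < c → ∀ᶠ γ in nhds 0, f γ < c :=
      fun f c hf h0 hc => hf.continuousAt.eventually_lt continuousAt_const (by rw [h0]; exact hc)
    have hz : (0:ℝ) ^ ((1:ℝ)/4) = 0 := Real.zero_rpow (by norm_num)
    refine (key (fun γ => γ) _ continuous_id rfl hγ').and
      ((key (fun γ => γ) _ continuous_id rfl one_pos).and
      ((key (fun γ => 2 * κ * CT * γ) _ (by fun_prop) (by simp) (by positivity)).and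
      ((key (fun γ => B * √γ) _ (by fun_prop) (by simp) (by positivity)).and
      ((key (fun γ => C * γ ^ ((1:ℝ)/4)) _ (by fun_prop) (by rw [hz]; simp) hr).and
      (key (fun γ => A * ((γ ^ ((1:ℝ)/4)) ^ 2 + K * C ^ 3 * γ ^ ((1:ℝ)/4))) _ (by fun_prop)
        (by rw [hz]; simp) (by norm_num))))))
  obtain ⟨γ₁, hγ₁, hsm⟩ := Metric.eventually_nhds_iff.mp hev
  -- past some `M` the upper endpoints `γ_m` lie in the range of the asymptotics; the finitely
  -- many earlier intervals are avoided by taking `γ₀` below their left endpoints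
  obtain ⟨M₀, hM₀⟩ := Filter.eventually_atTop.mp
    (hsmall.2.eventually (Metric.ball_mem_nhds (0:ℝ) hγ₁))
  have hfin : ∀ M : ℕ, ∃ g > (0:ℝ), ∀ m, m₀ ≤ m → m < M → g ≤ Γt m := by
    intro M
    induction M with
    | zero => exact ⟨1, one_pos, fun m _ h => absurd h (by omega)⟩
    | succ M ih =>
      obtain ⟨g, hg, hgm⟩ := ih
      by_cases hM : m₀ ≤ M
      · refine ⟨min g (Γt M), lt_min hg (hpos M hM).1, fun m h1 h2 => ?_⟩
        rcases Nat.lt_succ_iff_lt_or_eq.mp h2 with h | rfl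
        · exact (min_le_left _ _).trans (hgm m h1 h)
        · exact min_le_right _ _
      · exact ⟨g, hg, fun m h1 h2 => hgm m h1 (by omega)⟩
  obtain ⟨g, hg, hgm⟩ := hfin (max M₀ 1)
  refine ⟨4 * A ^ 2 + C ^ 4, by positivity, min g γ₁, lt_min hg hγ₁, ?_⟩
  intro m hm γ hγmem hγlt xc _ x hx n hn t _
  obtain ⟨hΓ0, -⟩ := hpos m hm
  have hγ0 : 0 < γ := hΓ0.trans hγmem.1
  have hmM : max M₀ 1 ≤ m := by
    by_contra hlt
    have h1 := hgm m hm (by omega)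
    have h2 := hγlt.trans_le (min_le_left _ _)
    linarith [hγmem.1]
  have hm1 : 1 ≤ m := (le_max_right _ _).trans hmM
  obtain ⟨hg', -, hgs, -, -, -⟩ := hsm (hM₀ m ((le_max_left _ _).trans hmM))
  obtain ⟨hγ'γ, hγ1, hγs, hγB, hγr, hγA⟩ := hsm (y := γ) (by
    rw [Real.dist_eq, sub_zero, abs_of_pos hγ0]
    exact hγlt.trans_le (min_le_right _ _))
  have hTγ := hTpos γ hγ0
  have hsγ : 0 < √γ := Real.sqrt_pos.mpr hγ0
  have hsγ1 : √γ ≤ 1 := Real.sqrt_le_one.mpr hγ1.le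
  have hTB : √γ * T γ ≤ B := by
    have h1 := (abs_le.mp (hTasym γ ⟨hγ0, hγ'γ⟩)).2
    have h2 : T γ ≤ √2 * π / √γ + |lam| + CT * γ := by linarith [le_abs_self lam]
    have h3 := mul_le_mul_of_nonneg_left h2 hsγ.le
    have h4 : √γ * (√2 * π / √γ + |lam| + CT * γ) = √2 * π + √γ * |lam| + CT * (√γ * γ) := by
      field_simp
    have h5 : √γ * |lam| ≤ |lam| := mul_le_of_le_one_left (abs_nonneg _) hsγ1
    have h6 : CT * (√γ * γ) ≤ CT :=
      mul_le_of_le_one_right hCT.le (mul_le_one₀ hsγ1 hγ0.le hγ1.le)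
    linarith
  set p := γ ^ ((1:ℝ)/4) with hpdef
  have hp : 0 < p := Real.rpow_pos_of_pos hγ0 _
  have hp4 : p ^ 4 = γ := by
    rw [hpdef, ← Real.rpow_natCast, ← Real.rpow_mul hγ0.le]; norm_num
  have hp2 : p ^ 2 = √γ := by
    rw [Real.sqrt_eq_rpow, hpdef, ← Real.rpow_natCast, ← Real.rpow_mul hγ0.le]; norm_num
  have hTB' : T γ ≤ B / p ^ 2 := by
    rw [hp2, le_div_iff₀ hsγ]; linarith
  have hlow := nonresonance_lower T lam CT γ' κ ν hCT hTasym hκ hν γ (γt m) m hm1 hγ0 hγmem.2 hg'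
    hTγ (hTpos _ (hpos m hm).2) (by rw [hγeq m hm, hω₀ _ (hpos m hm).2]) hgs.le
  have hup := nonresonance_upper T lam CT γ' κ ν (B * √γ) hCT hTasym hκ hν γ (Γt m) m hΓ0 hγmem.1
    hγ'γ hTγ (hTpos _ hΓ0) (by rw [hΓeq m hm, hω₀ _ hΓ0])
    (by
      calc γ * T γ = (√γ * T γ) * √γ := by
            nth_rewrite 1 [← Real.mul_self_sqrt hγ0.le]; ring
        _ ≤ B * √γ := mul_le_mul_of_nonneg_right hTB hsγ.le)
    hγs.le hγB.le
  have hsin := abs_sin_lower ν _ m hν hlow hup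
  rw [← hp4] at hx hsin
  obtain ⟨j, rfl⟩ : ∃ j : ℕ, n = j + 1 := ⟨(n - 1).toNat, by omega⟩
  have hdec := breather_decay V κ K r C B s₀ _ p xc x hκ hK hB hs₀ (by rw [hp4]; exact hTγ) hp hC
    hVK (by rw [hp4]; exact hTB') hsin hγr.le hγA.le (by rw [hp4]) hx j t
  refine hdec.trans ?_
  have hfinal := decay_rate A C p hApos hC hp j
  rw [hp4] at hfinal
  exact_mod_cast hfinal
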